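/- There is a total computable function mapping every finite set Ti of tiles together with a designated tile τ₀ ∈ Ti (a tile is a function from {east,west,north,south} to a finite set C of colours) to a HyperLTL sentence φ_Ti such that φ_Ti is satisfiable if and only if there exists a tiling ti : ℕ×ℕ → Ti of the positive quadrant satisfying ti(i,j)(east) = ti(i+1,j)(west) and ti(i,j)(north) = ti(i,j+1)(south) for all i,j, and ti(0,j) = τ₀ for infinitely many j. Consequently, HyperLTL satisfiability is Σ¹₁-hard (every Σ¹₁ set many-one reduces to it via a total computable function). -/

import Mathlib

/-! ### HyperLTL: syntax and semantics -/

/-- A trace over a set `AP` of atomic propositions. -/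
abbrev Trace (AP : Type) : Type := ℕ → Set AP

/-- The suffix of a trace from position `j` onwards. -/
def Trace.shift {AP : Type} (t : Trace AP) (j : ℕ) : Trace AP := fun i => t (i + j)

/-- Quantifier-free HyperLTL formulas; trace variables are natural numbers. -/
inductive QF (AP : Type) : Type where
  | atom : AP → ℕ → QF AP
  | neg  : QF AP → QF AP
  | disj : QF AP → QF AP → QF AP
  | next : QF AP → QF AP
  | untl : QF AP → QF AP → QF AP

/-- HyperLTL formulas: a block of trace quantifiers followed by a
quantifier-free formula (HyperLTL formulas are in prenex normal form). -/
inductive HFormula (AP : Type) : Type where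
  | ex  : ℕ → HFormula AP → HFormula AP
  | all : ℕ → HFormula AP → HFormula AP
  | qf  : QF AP → HFormula AP

/-- The simultaneous shift of a trace assignment. -/
def shiftAsg {AP : Type} (As : ℕ → Trace AP) (j : ℕ) : ℕ → Trace AP :=
  fun x => Trace.shift (As x) j

/-- Semantics of quantifier-free HyperLTL formulas w.r.t. a trace assignment. -/
def QF.sat {AP : Type} : QF AP → (ℕ → Trace AP) → Prop
  | .atom a x, As => a ∈ As x 0
  | .neg ψ, As => ¬ ψ.sat As
  | .disj ψ₁ ψ₂, As => ψ₁.sat As ∨ ψ₂.sat As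
  | .next ψ, As => ψ.sat (shiftAsg As 1)
  | .untl ψ₁ ψ₂, As => ∃ j, ψ₂.sat (shiftAsg As j) ∧ ∀ j' < j, ψ₁.sat (shiftAsg As j')

/-- Semantics of HyperLTL formulas w.r.t. a set of traces and a trace assignment. -/
def HFormula.sat {AP : Type} : HFormula AP → Set (Trace AP) → (ℕ → Trace AP) → Prop
  | .ex x φ, T, As => ∃ t ∈ T, φ.sat T (Function.update As x t)
  | .all x φ, T, As => ∀ t ∈ T, φ.sat T (Function.update As x t)
  | .qf ψ, _, As => ψ.sat As

def QF.freeVars {AP : Type} : QF AP → Set ℕ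
  | .atom _ x => {x}
  | .neg ψ => ψ.freeVars
  | .disj ψ₁ ψ₂ => ψ₁.freeVars ∪ ψ₂.freeVars
  | .next ψ => ψ.freeVars
  | .untl ψ₁ ψ₂ => ψ₁.freeVars ∪ ψ₂.freeVars

def HFormula.freeVars {AP : Type} : HFormula AP → Set ℕ
  | .ex x φ => φ.freeVars \ {x}
  | .all x φ => φ.freeVars \ {x}
  | .qf ψ => ψ.freeVars

/-- A sentence is a formula without free variables. -/
def HFormula.IsSentence {AP : Type} (φ : HFormula AP) : Prop := φ.freeVars = ∅

/-- `T` is a model of `φ` (for sentences the initial assignment is irrelevant). -/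
def HModels {AP : Type} (T : Set (Trace AP)) (φ : HFormula AP) : Prop :=
  φ.sat T (fun _ _ => ∅)

/-- A HyperLTL sentence is satisfiable if it has a model. -/
def HSatisfiable {AP : Type} (φ : HFormula AP) : Prop := ∃ T, HModels T φ

/-! ### A fixed computable injective encoding of HyperLTL formulas -/

def QF.codeWith {AP : Type} (e : AP → ℕ) : QF AP → ℕ
  | .atom a x => Nat.pair 0 (Nat.pair (e a) x)
  | .neg ψ => Nat.pair 1 (ψ.codeWith e)
  | .disj ψ₁ ψ₂ => Nat.pair 2 (Nat.pair (ψ₁.codeWith e) (ψ₂.codeWith e))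
  | .next ψ => Nat.pair 3 (ψ.codeWith e)
  | .untl ψ₁ ψ₂ => Nat.pair 4 (Nat.pair (ψ₁.codeWith e) (ψ₂.codeWith e))

def HFormula.codeWith {AP : Type} (e : AP → ℕ) : HFormula AP → ℕ
  | .ex x φ => Nat.pair 0 (Nat.pair x (φ.codeWith e))
  | .all x φ => Nat.pair 1 (Nat.pair x (φ.codeWith e))
  | .qf ψ => Nat.pair 2 (ψ.codeWith e)

/-! ### Arithmetic formulas and Σ¹₁ sets -/

/-- Terms of arithmetic (signature 0,1,+,·) with number variables and
applications of (free) type-1 function variables. -/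
inductive ATerm : Type where
  | var : ℕ → ATerm
  | zero : ATerm
  | one : ATerm
  | add : ATerm → ATerm → ATerm
  | mul : ATerm → ATerm → ATerm
  | app : ℕ → ATerm → ATerm

def ATerm.eval : ATerm → (ℕ → ℕ) → (ℕ → ℕ → ℕ) → ℕ
  | .var x, v, _ => v x
  | .zero, _, _ => 0
  | .one, _, _ => 1
  | .add s t, v, F => s.eval v F + t.eval v F
  | .mul s t, v, F => s.eval v F * t.eval v F
  | .app f t, v, F => F f (t.eval v F)

/-- Formulas of arithmetic with arbitrary quantification over natural numbers
(type-0 objects); type-1 function variables occur free, via `ATerm.app`. -/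
inductive AForm : Type where
  | eq : ATerm → ATerm → AForm
  | lt : ATerm → ATerm → AForm
  | neg : AForm → AForm
  | disj : AForm → AForm → AForm
  | exN : ℕ → AForm → AForm
  | allN : ℕ → AForm → AForm

def AForm.sat : AForm → (ℕ → ℕ) → (ℕ → ℕ → ℕ) → Prop
  | .eq s t, v, F => s.eval v F = t.eval v F
  | .lt s t, v, F => s.eval v F < t.eval v F
  | .neg φ, v, F => ¬ φ.sat v F
  | .disj φ ψ, v, F => φ.sat v F ∨ ψ.sat v F
  | .exN x φ, v, F => ∃ n : ℕ, φ.sat (Function.update v x n) F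
  | .allN x φ, v, F => ∀ n : ℕ, φ.sat (Function.update v x n) F

/-- A set `N ⊆ ℕ` is Σ¹₁ if it is defined by existential quantification over
type-1 objects (functions ℕ → ℕ) followed by an arithmetic formula with
arbitrary quantification over natural numbers. -/
def Sigma11 (N : Set ℕ) : Prop :=
  ∃ ψ : AForm, ∀ x : ℕ, x ∈ N ↔ ∃ F : ℕ → ℕ → ℕ, ψ.sat (fun _ => x) F

/-- `A` many-one reduces to `B` via a total computable function. -/
def ManyOneRed (A B : Set ℕ) : Prop :=
  ∃ f : ℕ → ℕ, Computable f ∧ ∀ x, x ∈ A ↔ f x ∈ B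

/-! ### Tiles and the recurring tiling problem -/

/-- A tile: its east, west, north and south colours (colours are naturals;
a finite set of tiles only uses finitely many colours). -/
abbrev Tile : Type := ℕ × ℕ × ℕ × ℕ

def Tile.east (τ : Tile) : ℕ := τ.1
def Tile.west (τ : Tile) : ℕ := τ.2.1
def Tile.north (τ : Tile) : ℕ := τ.2.2.1
def Tile.south (τ : Tile) : ℕ := τ.2.2.2

/-- There is a tiling of the positive quadrant with tiles from `Ti`, matching
horizontally and vertically, in which `τ₀` occurs infinitely often in column 0. -/
def RecurTiling (Ti : Finset Tile) (τ₀ : Tile) : Prop :=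
  ∃ ti : ℕ × ℕ → Tile, (∀ p, ti p ∈ Ti) ∧
    (∀ i j, (ti (i, j)).east = (ti (i + 1, j)).west) ∧
    (∀ i j, (ti (i, j)).north = (ti (i, j + 1)).south) ∧
    (∀ m, ∃ j, m ≤ j ∧ ti (0, j) = τ₀)

/-!
A recurrent tiling is encoded by the set of its columns, each of them a trace: the sentence
`∃π₀. ∀π₁. ∃π₂. ψ` provides a column in which the designated tile recurs and a matching successor
of every column, so that iterating the choice of `π₂` from `π₀` yields the tiling.

For an arbitrary Σ¹₁ set, a trace on which every relevant proposition holds exactly once records a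
tuple of natural numbers, the positions of the propositions. Given a formula `ψ` of arithmetic, such
a tuple holds an assignment of numbers to the variables of `ψ`, the resulting values of the terms
and the truth values of the subformulas. A sentence of the form `∃π₀. ∀π₁. ∀π₂. ∃π₃` requires that
* every assignment occurs: a counter takes all values since `π₃` increments that of `π₁`, and `π₃`
  shifts the counter of `π₂` into the assignment of `π₁`;
* the values of `x₀ + x₁` and `x₀ * x₁` satisfy the recursive definitions of the operations, whence
  they are the true sums and products because every assignment occurs, and they can be looked up to
  compute the values of all terms;
* the function variable `f` is interpreted by the values of `f x₀`, which are looked up likewise;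
* the truth value of `∃x φ` is compared with that of `φ` under all assignments that differ only in
  `x`; a recorded witness makes this a condition with universally quantified traces only.

Conversely, the tuples with the true values form a model. Its assignments are required to be
constant beyond the variables of `ψ`, so that each of them is determined by a finite part.

The input `n` enters only as the position of a proposition, that is, through a formula `Xⁿ a`.
-/

/-! ### Derived connectives -/

section Shift

variable {AP : Type} (As : ℕ → Trace AP)

theorem shiftAsg_apply (j x i : ℕ) : shiftAsg As j x i = As x (i + j) := rfl

theorem shiftAsg_shiftAsg (j k : ℕ) : shiftAsg (shiftAsg As j) k = shiftAsg As (k + j) := by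
  funext x i
  simp only [shiftAsg_apply, Nat.add_assoc]

end Shift

namespace QF

variable {AP : Type}

/-- Conjunction of quantifier-free formulas. -/
def and (q r : QF AP) : QF AP := .neg (.disj (.neg q) (.neg r))

/-- Implication of quantifier-free formulas. -/
def imp (q r : QF AP) : QF AP := .disj (.neg q) r

/-- The `n`-fold iterate `Xⁿ q` of the next operator. -/
def nextN (n : ℕ) (q : QF AP) : QF AP := next^[n] q

@[simp]
theorem freeVars_and (q r : QF AP) : (q.and r).freeVars = q.freeVars ∪ r.freeVars := rfl

@[simp]
theorem freeVars_imp (q r : QF AP) : (q.imp r).freeVars = q.freeVars ∪ r.freeVars := rfl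

@[simp]
theorem freeVars_nextN (n : ℕ) (q : QF AP) : (nextN n q).freeVars = q.freeVars := by
  induction n with
  | zero => rfl
  | succ n ih => rw [← ih, nextN, Function.iterate_succ_apply', freeVars, nextN]

@[simp]
theorem sat_and (q r : QF AP) (As : ℕ → Trace AP) : (q.and r).sat As ↔ q.sat As ∧ r.sat As := by
  simp only [and, sat, not_or, not_not]

@[simp]
theorem sat_imp (q r : QF AP) (As : ℕ → Trace AP) :
    (q.imp r).sat As ↔ (q.sat As → r.sat As) := by
  simp only [imp, sat, imp_iff_not_or]

@[simp]
theorem sat_nextN (n : ℕ) (q : QF AP) (As : ℕ → Trace AP) :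
    (nextN n q).sat As ↔ q.sat (shiftAsg As n) := by
  induction n generalizing As with
  | zero => rfl
  | succ n ih =>
    rw [nextN, Function.iterate_succ_apply', sat, ← nextN, ih, shiftAsg_shiftAsg]

variable [Inhabited AP]

/-- The valid formula `a_π ∨ ¬a_π` for the default proposition `a` and the variable `π = 0`. -/
def top : QF AP := .disj (.atom default 0) (.neg (.atom default 0))

/-- A formula with the truth value of the decidable proposition `p`. -/
def ofProp (p : Prop) [Decidable p] : QF AP := if p then top else .neg top

/-- The temporal operator `F`. -/
def eventually (q : QF AP) : QF AP := .untl top q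

/-- The temporal operator `G`. -/
def globally (q : QF AP) : QF AP := .neg (eventually (.neg q))

/-- The conjunction of a list of formulas. -/
def all (l : List (QF AP)) : QF AP := l.foldr and top

/-- The disjunction of a list of formulas. -/
def any (l : List (QF AP)) : QF AP := l.foldr disj (.neg top)

/-- On the trace `x`, the proposition `a` holds at exactly one position. -/
def once (a : AP) (x : ℕ) : QF AP :=
  and (eventually (.atom a x)) (globally (imp (.atom a x) (.next (globally (.neg (.atom a x))))))

@[simp]
theorem freeVars_top : (top : QF AP).freeVars = {0} := Set.union_self _

@[simp]
theorem freeVars_ofProp (p : Prop) [Decidable p] : (ofProp p : QF AP).freeVars = {0} := by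
  unfold ofProp
  split <;> exact freeVars_top

@[simp]
theorem freeVars_eventually (q : QF AP) : (eventually q).freeVars = {0} ∪ q.freeVars := by
  rw [eventually, freeVars, freeVars_top]

@[simp]
theorem freeVars_globally (q : QF AP) : (globally q).freeVars = {0} ∪ q.freeVars :=
  freeVars_eventually (.neg q)

theorem freeVars_all_subset {l : List (QF AP)} {S : Set ℕ} (h₀ : 0 ∈ S)
    (h : ∀ q ∈ l, q.freeVars ⊆ S) : (all l).freeVars ⊆ S := by
  induction l with
  | nil => simpa [all] using h₀
  | cons q l ih =>
    obtain ⟨hq, hl⟩ := List.forall_mem_cons.1 h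
    exact Set.union_subset hq (ih hl)

theorem freeVars_any_subset {l : List (QF AP)} {S : Set ℕ} (h₀ : 0 ∈ S)
    (h : ∀ q ∈ l, q.freeVars ⊆ S) : (any l).freeVars ⊆ S := by
  induction l with
  | nil => simpa [any, freeVars] using h₀
  | cons q l ih =>
    obtain ⟨hq, hl⟩ := List.forall_mem_cons.1 h
    exact Set.union_subset hq (ih hl)

@[simp]
theorem freeVars_once (a : AP) (x : ℕ) : (once a x).freeVars = {0, x} := by
  ext y
  simp only [once, freeVars_and, freeVars_imp, freeVars_eventually, freeVars_globally, freeVars,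
    Set.mem_union, Set.mem_insert_iff, Set.mem_singleton_iff]
  tauto

variable (As : ℕ → Trace AP)

@[simp]
theorem sat_top : (top : QF AP).sat As := em _

@[simp]
theorem sat_ofProp (p : Prop) [Decidable p] : (ofProp p : QF AP).sat As ↔ p := by
  unfold ofProp
  split <;> simp [sat, *]

@[simp]
theorem sat_eventually (q : QF AP) : (eventually q).sat As ↔ ∃ j, q.sat (shiftAsg As j) := by
  simp only [eventually, sat, sat_top, implies_true, and_true]

@[simp]
theorem sat_globally (q : QF AP) : (globally q).sat As ↔ ∀ j, q.sat (shiftAsg As j) := by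
  simp only [globally, sat, sat_eventually, not_exists, not_not]

@[simp]
theorem sat_all (l : List (QF AP)) : (all l).sat As ↔ ∀ q ∈ l, q.sat As := by
  induction l with
  | nil => simp [all]
  | cons q l ih => simp only [List.forall_mem_cons, ← ih]; exact sat_and ..

@[simp]
theorem sat_any (l : List (QF AP)) : (any l).sat As ↔ ∃ q ∈ l, q.sat As := by
  induction l with
  | nil => simp [any, sat]
  | cons q l ih => simp only [List.mem_cons, exists_eq_or_imp, ← ih]; rfl

theorem sat_once (a : AP) (x : ℕ) : (once a x).sat As ↔ ∃ m, ∀ i, a ∈ As x i ↔ i = m := by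
  simp only [once, sat_and, sat_eventually, sat_globally, sat_imp, sat, shiftAsg_apply,
    Nat.zero_add]
  constructor
  · rintro ⟨⟨m, hm⟩, hlater⟩
    have le_of_mem {i j : ℕ} (hi : a ∈ As x i) (hj : a ∈ As x j) : j ≤ i := by
      by_contra! hij
      exact hlater i hi (j - i - 1) (by rwa [show j - i - 1 + 1 + i = j by omega])
    exact ⟨m, fun i => ⟨fun hi => le_antisymm (le_of_mem hm hi) (le_of_mem hi hm), (· ▸ hm)⟩⟩
  · rintro ⟨m, hm⟩
    exact ⟨⟨m, (hm m).2 rfl⟩, fun i hi j hj => by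
      have := (hm i).1 hi
      have := (hm _).1 hj
      omega⟩

end QF

/-! ### Codes of formulas -/

theorem QF.codeWith_injective {AP : Type} {e : AP → ℕ} (he : Function.Injective e) :
    Function.Injective (QF.codeWith e) := by
  intro q
  induction q <;> rintro (_ | _ | _ | _ | _) h <;>
    simp only [codeWith, Nat.pair_eq_pair, he.eq_iff] at h <;> grind

theorem HFormula.codeWith_injective {AP : Type} {e : AP → ℕ} (he : Function.Injective e) :
    Function.Injective (HFormula.codeWith e) := by
  intro φ
  induction φ <;> rintro (_ | _ | _) h <;>
    simp only [codeWith, Nat.pair_eq_pair, (QF.codeWith_injective he).eq_iff] at h <;> grind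

/-- The codes of the formulas `q a` depend primitive recursively on `a`. -/
def QF.PrimrecCode {α : Type} [Primcodable α] (q : α → QF ℕ) : Prop :=
  Primrec fun a => (q a).codeWith id

/-- The codes of the HyperLTL formulas `φ a` depend primitive recursively on `a`. -/
def HFormula.PrimrecCode {α : Type} [Primcodable α] (φ : α → HFormula ℕ) : Prop :=
  Primrec fun a => (φ a).codeWith id

section PrimrecCode

open Primrec

variable {α β : Type} [Primcodable α] [Primcodable β] {q r : α → QF ℕ} {φ : α → HFormula ℕ}

namespace QF.PrimrecCode

theorem atom {a : α → ℕ} (ha : Primrec a) (x : ℕ) : PrimrecCode fun i => .atom (a i) x :=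
  Primrec₂.natPair.comp (const 0) (Primrec₂.natPair.comp ha (const x))

theorem neg (hq : PrimrecCode q) : PrimrecCode fun i => .neg (q i) :=
  Primrec₂.natPair.comp (const 1) hq

theorem disj (hq : PrimrecCode q) (hr : PrimrecCode r) :
    PrimrecCode fun i => .disj (q i) (r i) :=
  Primrec₂.natPair.comp (const 2) (Primrec₂.natPair.comp hq hr)

theorem next (hq : PrimrecCode q) : PrimrecCode fun i => .next (q i) :=
  Primrec₂.natPair.comp (const 3) hq

theorem untl (hq : PrimrecCode q) (hr : PrimrecCode r) :
    PrimrecCode fun i => .untl (q i) (r i) :=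
  Primrec₂.natPair.comp (const 4) (Primrec₂.natPair.comp hq hr)

theorem const (q : QF ℕ) : PrimrecCode fun _ : α => q := Primrec.const _

theorem and (hq : PrimrecCode q) (hr : PrimrecCode r) : PrimrecCode fun i => (q i).and (r i) :=
  (hq.neg.disj hr.neg).neg

theorem imp (hq : PrimrecCode q) (hr : PrimrecCode r) : PrimrecCode fun i => (q i).imp (r i) :=
  hq.neg.disj hr

theorem ofProp {p : α → Prop} [DecidablePred p] (hp : PrimrecPred p) :
    PrimrecCode fun i => ofProp (p i) := by
  refine (Primrec.ite hp (Primrec.const (top.codeWith id))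
    (Primrec.const ((QF.neg top).codeWith id))).of_eq fun i => ?_
  exact (apply_ite (codeWith id) (p i) top (.neg top)).symm

theorem eventually (hq : PrimrecCode q) : PrimrecCode fun i => (q i).eventually :=
  (const top).untl hq

theorem globally (hq : PrimrecCode q) : PrimrecCode fun i => (q i).globally :=
  hq.neg.eventually.neg

theorem nextN {n : α → ℕ} (hn : Primrec n) (hq : PrimrecCode q) :
    PrimrecCode fun i => nextN (n i) (q i) := by
  have step : Primrec₂ fun (_ : α) (c : ℕ) => Nat.pair 3 c :=
    Primrec₂.natPair.comp (Primrec.const 3) snd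
  refine (nat_iterate hn hq step).of_eq fun i => ?_
  exact ((Function.Semiconj.iterate_right (f := codeWith id) (ga := QF.next) fun _ => rfl)
    (n i) (q i)).symm

theorem foldr {op : QF ℕ → QF ℕ → QF ℕ} {codeOp : ℕ → ℕ → ℕ} (hcodeOp : Primrec₂ codeOp)
    (hop : ∀ q r, (op q r).codeWith id = codeOp (q.codeWith id) (r.codeWith id)) (z : QF ℕ)
    {l : α → List β} (hl : Primrec l) {q : α → β → QF ℕ}
    (hq : PrimrecCode fun p : α × β => q p.1 p.2) :
    PrimrecCode fun i => ((l i).map (q i)).foldr op z := by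
  have step : Primrec₂ fun (i : α) (p : β × ℕ) => codeOp ((q i p.1).codeWith id) p.2 :=
    hcodeOp.comp (hq.comp (pair fst (fst.comp snd))) (snd.comp snd)
  refine (list_foldr hl (Primrec.const (z.codeWith id)) step).of_eq fun i => ?_
  dsimp only
  induction l i with
  | nil => rfl
  | cons b l ih => simp only [List.foldr_cons, List.map_cons, hop, ih]

theorem all {l : α → List β} (hl : Primrec l) {q : α → β → QF ℕ}
    (hq : PrimrecCode fun p : α × β => q p.1 p.2) :
    PrimrecCode fun i => all ((l i).map (q i)) := by
  have pair_const (c : ℕ) : Primrec (Nat.pair c) := Primrec₂.natPair.comp (Primrec.const c) .id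
  refine foldr (codeOp := fun a b =>
    Nat.pair 1 (Nat.pair 2 (Nat.pair (Nat.pair 1 a) (Nat.pair 1 b)))) ?_ (fun _ _ => rfl) _ hl hq
  exact (pair_const 1).comp ((pair_const 2).comp
    (Primrec₂.natPair.comp ((pair_const 1).comp fst) ((pair_const 1).comp snd)))

theorem any {l : α → List β} (hl : Primrec l) {q : α → β → QF ℕ}
    (hq : PrimrecCode fun p : α × β => q p.1 p.2) :
    PrimrecCode fun i => any ((l i).map (q i)) :=
  foldr (codeOp := fun a b => Nat.pair 2 (Nat.pair a b))
    (Primrec₂.natPair.comp (Primrec.const 2) (Primrec₂.natPair.comp fst snd))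
    (fun _ _ => rfl) _ hl hq

end QF.PrimrecCode

namespace HFormula.PrimrecCode

theorem ex (x : ℕ) (hφ : PrimrecCode φ) : PrimrecCode fun i => .ex x (φ i) :=
  Primrec₂.natPair.comp (const 0) (Primrec₂.natPair.comp (const x) hφ)

theorem all (x : ℕ) (hφ : PrimrecCode φ) : PrimrecCode fun i => .all x (φ i) :=
  Primrec₂.natPair.comp (const 1) (Primrec₂.natPair.comp (const x) hφ)

theorem qf (hq : QF.PrimrecCode q) : PrimrecCode fun i => .qf (q i) :=
  Primrec₂.natPair.comp (const 2) hq

end HFormula.PrimrecCode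

end PrimrecCode

/-! ### Recurrent tilings -/

open Encodable (encode decode)

/-- The trace `s` stands for a column of tiles from `L`, in which the tile `τ` at position `j` is
represented by the proposition `encode τ`. Each position carries a tile, all tiles at successive
positions match, and the tiles of `s` match those at the same position of `t`. -/
structure ColumnsMatch (L : List Tile) (s t : Trace ℕ) : Prop where
  exists_tile : ∀ j, ∃ τ ∈ L, encode τ ∈ s j
  north_eq : ∀ j, ∀ τ ∈ L, ∀ τ' ∈ L, encode τ ∈ s j → encode τ' ∈ s (j + 1) → τ.north = τ'.south
  east_eq : ∀ j, ∀ τ ∈ L, ∀ τ' ∈ L, encode τ ∈ s j → encode τ' ∈ t j → τ.east = τ'.west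

theorem recurTiling_iff_exists_columns {L : List Tile} {τ₀ : Tile} (h₀ : τ₀ ∈ L) :
    RecurTiling L.toFinset τ₀ ↔ ∃ col : ℕ → Trace ℕ,
      (∀ m, ∃ j, m ≤ j ∧ encode τ₀ ∈ col 0 j) ∧ ∀ i, ColumnsMatch L (col i) (col (i + 1)) := by
  constructor
  · rintro ⟨ti, hmem, heast, hnorth, hrec⟩
    refine ⟨fun i j => {encode (ti (i, j))}, fun m => ?_, fun i => ⟨fun j => ?_, ?_, ?_⟩⟩
    · obtain ⟨j, hmj, hj⟩ := hrec m
      exact ⟨j, hmj, congrArg encode hj.symm⟩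
    · exact ⟨ti (i, j), List.mem_toFinset.1 (hmem _), rfl⟩
    all_goals
      intro j τ _ τ' _ h h'
      rw [Encodable.encode_injective h, Encodable.encode_injective h']
    · exact hnorth i j
    · exact heast i j
  · rintro ⟨col, hrec, hcol⟩
    have exists_tile (p : ℕ × ℕ) : ∃ τ ∈ L, encode τ ∈ col p.1 p.2 ∧
        (encode τ₀ ∈ col p.1 p.2 → τ = τ₀) := by
      by_cases h : encode τ₀ ∈ col p.1 p.2
      · exact ⟨τ₀, h₀, h, fun _ => rfl⟩
      · obtain ⟨τ, hτ, hcolτ⟩ := (hcol p.1).exists_tile p.2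
        exact ⟨τ, hτ, hcolτ, (absurd · h)⟩
    choose ti hmem hti hti₀ using exists_tile
    refine ⟨ti, fun p => List.mem_toFinset.2 (hmem p), fun i j => ?_, fun i j => ?_, fun m => ?_⟩
    · exact (hcol i).east_eq j _ (hmem _) _ (hmem _) (hti (i, j)) (hti (i + 1, j))
    · exact (hcol i).north_eq j _ (hmem _) _ (hmem _) (hti (i, j)) (hti (i, j + 1))
    · obtain ⟨j, hmj, hj⟩ := hrec m
      exact ⟨j, hmj, hti₀ (0, j) hj⟩

/-- The tiles `τ` and `τ'` match wherever they are neighbours, `τ` being in the column `1` and `τ'`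
above it in the same column or beside it in the column `2`. -/
def neighboursMatch (τ τ' : Tile) : QF ℕ :=
  (((QF.atom (encode τ) 1).and (.next (.atom (encode τ') 1))).imp
      (.ofProp (τ.north = τ'.south))).and
    (((QF.atom (encode τ) 1).and (.atom (encode τ') 2)).imp (.ofProp (τ.east = τ'.west)))

/-- The matrix of `tilingSentence`. -/
def tilingMatrix (L : List Tile) (τ₀ : Tile) : QF ℕ :=
  (QF.globally (.eventually (.atom (encode τ₀) 0))).and <| .globally <|
    (QF.any (L.map fun τ => .atom (encode τ) 1)).and <|
      .all (L.map fun τ => .all (L.map fun τ' => neighboursMatch τ τ'))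

/-- The sentence `∃π₀. ∀π₁. ∃π₂. ψ`, where `ψ` says that `τ₀` recurs in `π₀` and that the column
`π₁` can be followed by the column `π₂`. -/
def tilingSentence (L : List Tile) (τ₀ : Tile) : HFormula ℕ :=
  .ex 0 (.all 1 (.ex 2 (.qf (tilingMatrix L τ₀))))

theorem isSentence_tilingSentence (L : List Tile) (τ₀ : Tile) :
    (tilingSentence L τ₀).IsSentence := by
  have hmatrix : (tilingMatrix L τ₀).freeVars ⊆ {0, 1, 2} := by
    have hany : (QF.any (L.map fun τ => .atom (encode τ) 1)).freeVars ⊆ {0, 1, 2} := by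
      refine QF.freeVars_any_subset (by simp) (List.forall_mem_map.2 fun τ _ => ?_)
      simp [QF.freeVars]
    have hall : (QF.all (L.map fun τ => .all (L.map fun τ' => neighboursMatch τ τ'))).freeVars ⊆
        {0, 1, 2} := by
      refine QF.freeVars_all_subset (by simp) (List.forall_mem_map.2 fun τ _ => ?_)
      refine QF.freeVars_all_subset (by simp) (List.forall_mem_map.2 fun τ' _ => ?_)
      simp [neighboursMatch, QF.freeVars, Set.insert_subset_iff]
    simpa [tilingMatrix, QF.freeVars, Set.insert_subset_iff] using ⟨hany, hall⟩
  simpa [HFormula.IsSentence, tilingSentence, HFormula.freeVars, Set.sdiff_sdiff,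
    Set.sdiff_eq_empty] using hmatrix

theorem sat_neighboursMatch (τ τ' : Tile) (As : ℕ → Trace ℕ) :
    (neighboursMatch τ τ').sat As ↔
      (encode τ ∈ As 1 0 → encode τ' ∈ As 1 1 → τ.north = τ'.south) ∧
      (encode τ ∈ As 1 0 → encode τ' ∈ As 2 0 → τ.east = τ'.west) := by
  simp only [neighboursMatch, QF.sat_and, QF.sat_imp, QF.sat_ofProp, QF.sat, shiftAsg_apply,
    and_imp, Nat.zero_add]

theorem sat_tilingMatrix (L : List Tile) (τ₀ : Tile) (As : ℕ → Trace ℕ) :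
    (tilingMatrix L τ₀).sat As ↔
      (∀ m, ∃ j, m ≤ j ∧ encode τ₀ ∈ As 0 j) ∧ ColumnsMatch L (As 1) (As 2) := by
  have hrec : (QF.globally (.eventually (.atom (encode τ₀) 0))).sat As ↔
      ∀ m, ∃ j, m ≤ j ∧ encode τ₀ ∈ As 0 j := by
    simp only [QF.sat_globally, QF.sat_eventually, QF.sat, shiftAsg_apply, Nat.zero_add]
    refine forall_congr' fun m => ⟨fun ⟨j, hj⟩ => ⟨j + m, by omega, hj⟩, fun ⟨j, hmj, hj⟩ => ?_⟩
    exact ⟨j - m, by rwa [Nat.sub_add_cancel hmj]⟩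
  rw [tilingMatrix, QF.sat_and, hrec, and_congr_right_iff]
  intro _
  simp only [QF.sat_globally, QF.sat_and, QF.sat_any, QF.sat_all, List.mem_map,
    exists_exists_and_eq_and, forall_exists_index, and_imp, forall_apply_eq_imp_iff₂,
    sat_neighboursMatch, QF.sat, shiftAsg_apply, Nat.zero_add, Nat.add_comm 1]
  exact ⟨fun h => ⟨fun j => (h j).1, fun j τ hτ τ' hτ' => ((h j).2 τ hτ τ' hτ').1,
      fun j τ hτ τ' hτ' => ((h j).2 τ hτ τ' hτ').2⟩,
    fun h j => ⟨h.exists_tile j, fun τ hτ τ' hτ' =>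
      ⟨h.north_eq j τ hτ τ' hτ', h.east_eq j τ hτ τ' hτ'⟩⟩⟩

theorem hmodels_tilingSentence_iff {T : Set (Trace ℕ)} {L : List Tile} {τ₀ : Tile} :
    HModels T (tilingSentence L τ₀) ↔ ∃ t₀ ∈ T, ∀ t₁ ∈ T, ∃ t₂ ∈ T,
      (∀ m, ∃ j, m ≤ j ∧ encode τ₀ ∈ t₀ j) ∧ ColumnsMatch L t₁ t₂ := by
  simp only [HModels, tilingSentence, HFormula.sat, sat_tilingMatrix]
  rfl

theorem hsatisfiable_tilingSentence_iff {L : List Tile} {τ₀ : Tile} (h₀ : τ₀ ∈ L) :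
    HSatisfiable (tilingSentence L τ₀) ↔ RecurTiling L.toFinset τ₀ := by
  rw [recurTiling_iff_exists_columns h₀]
  simp only [HSatisfiable, hmodels_tilingSentence_iff]
  constructor
  · rintro ⟨T, t₀, ht₀, hT⟩
    have ⟨_, _, hrec, _⟩ := hT t₀ ht₀
    choose! next hnext _ hmatch using hT
    have hcol (i : ℕ) : next^[i] t₀ ∈ T := Set.MapsTo.iterate hnext i ht₀
    refine ⟨fun i => next^[i] t₀, hrec, fun i => ?_⟩
    simpa only [Function.iterate_succ_apply'] using hmatch _ (hcol i)
  · rintro ⟨col, hrec, hcol⟩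
    refine ⟨Set.range col, col 0, ⟨0, rfl⟩, ?_⟩
    rintro _ ⟨i, rfl⟩
    exact ⟨col (i + 1), ⟨i + 1, rfl⟩, hrec, hcol i⟩

theorem primrec_codeWith_tilingSentence :
    Primrec fun p : List Tile × Tile => (tilingSentence p.1 p.2).codeWith id := by
  open Primrec in
  have hnorth : Primrec Tile.north := fst.comp (snd.comp snd)
  have hsouth : Primrec Tile.south := snd.comp (snd.comp snd)
  have heast : Primrec Tile.east := fst
  have hwest : Primrec Tile.west := fst.comp snd
  have hmatch : QF.PrimrecCode fun p : ((List Tile × Tile) × Tile) × Tile =>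
      neighboursMatch p.1.2 p.2 := by
    have hτ : Primrec fun p : ((List Tile × Tile) × Tile) × Tile => p.1.2 := snd.comp fst
    have hτ' : Primrec fun p : ((List Tile × Tile) × Tile) × Tile => p.2 := snd
    have hatom := QF.PrimrecCode.atom (Primrec.encode.comp hτ) 1
    have hatom' := QF.PrimrecCode.atom (Primrec.encode.comp hτ')
    exact ((hatom.and (hatom' 1).next).imp
        (.ofProp (Primrec.eq.comp (hnorth.comp hτ) (hsouth.comp hτ')))).and
      ((hatom.and (hatom' 2)).imp (.ofProp (Primrec.eq.comp (heast.comp hτ) (hwest.comp hτ'))))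
  have hsome : QF.PrimrecCode fun p : List Tile × Tile =>
      QF.any (p.1.map fun τ => .atom (encode τ) 1) :=
    .any fst (.atom (Primrec.encode.comp snd) 1)
  have hall : QF.PrimrecCode fun p : List Tile × Tile =>
      QF.all (p.1.map fun τ => .all (p.1.map fun τ' => neighboursMatch τ τ')) :=
    .all fst (q := fun p τ => .all (p.1.map fun τ' => neighboursMatch τ τ'))
      (.all (fst.comp fst) hmatch)
  have hrec : QF.PrimrecCode fun p : List Tile × Tile =>
      QF.globally (.eventually (.atom (encode p.2) 0)) :=
    (QF.PrimrecCode.atom (Primrec.encode.comp snd) 0).eventually.globally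
  exact ((HFormula.PrimrecCode.qf (hrec.and (hsome.and hall).globally)).ex 2).all 1 |>.ex 0

/-- The elements of a finite set in the order of their codes. The resulting list has the same code
as the set. -/
def encodeSort {α : Type*} [Encodable α] (s : Finset α) : List α :=
  s.sort (Encodable.encode' α ⁻¹'o (· ≤ ·))

theorem toFinset_encodeSort {α : Type*} [DecidableEq α] [Encodable α] (s : Finset α) :
    (encodeSort s).toFinset = s :=
  s.sort_toFinset _

theorem exists_computable_encode_finset_prod {α β : Type*} [Primcodable α] [Primcodable β]
    {g : List α × β → ℕ} (hg : Primrec g) :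
    ∃ f : ℕ → ℕ, Computable f ∧ ∀ p : Finset α × β, f (encode p) = g (encodeSort p.1, p.2) := by
  refine ⟨fun n => ((decode n : Option (List α × β)).map g).getD 0,
    (Primrec.option_getD.comp ((Primrec.option_map₁ hg).comp .decode) (.const 0)).to_comp,
    fun p => ?_⟩
  have hcode : encode p = encode (encodeSort p.1, p.2) := rfl
  dsimp only
  rw [hcode, Encodable.encodek, Option.map_some, Option.getD_some]

/-! ### Tuples of natural numbers as traces -/

section Tuples

variable {α κ : Type} [Primcodable α] [Encodable κ] {k : ℕ}

/-- The component `a` of the tuple `w` is recorded by the trace `t`: the proposition `encode a`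
holds at position `w a` and nowhere else. -/
def Trace.Records (t : Trace ℕ) (w : κ → ℕ) (a : κ) : Prop := ∀ i, encode a ∈ t i ↔ i = w a

/-- The trace recording all components of a tuple. -/
def Trace.ofTuple (w : κ → ℕ) : Trace ℕ := fun i => encode '' {a | w a = i}

/-- The tuple of the first positions at which the propositions hold on a trace, with the value `0`
where a proposition never holds. -/
noncomputable def Trace.toTuple (t : Trace ℕ) : κ → ℕ := fun a => sInf {i | encode a ∈ t i}

theorem Trace.records_ofTuple (w : κ → ℕ) (a : κ) : (ofTuple w).Records w a := fun i => by
  rw [ofTuple, Encodable.encode_injective.mem_set_image, Set.mem_ofPred_eq, eq_comm]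

theorem Trace.records_toTuple {t : Trace ℕ} {a : κ} (h : ∃ m, ∀ i, encode a ∈ t i ↔ i = m) :
    t.Records t.toTuple a := by
  obtain ⟨m, hm⟩ := h
  simpa only [Records, toTuple, hm, Set.ofPred_eq_eq_singleton, csInf_singleton] using hm

/-- A parametrized property of `k`-tuples of tuples is trace definable if a quantifier-free formula
with the trace variables `0, …, k - 1`, whose code is primitive recursive in the parameter,
expresses it on all traces that record a fixed finite number of components of the tuples. -/
def TraceDefinable (P : α → (Fin k → κ → ℕ) → Prop) : Prop :=
  ∃ (q : α → QF ℕ) (l : List κ), QF.PrimrecCode q ∧ (∀ n, (q n).freeVars ⊆ Set.Iio k) ∧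
    ∀ n (As : ℕ → Trace ℕ) W, (∀ a ∈ l, ∀ x : Fin k, (As x).Records (W x) a) →
      ((q n).sat As ↔ P n W)

namespace TraceDefinable

variable {P Q : α → (Fin k → κ → ℕ) → Prop}

theorem of_iff (hP : TraceDefinable P) (h : ∀ n W, Q n W ↔ P n W) : TraceDefinable Q := by
  simpa only [TraceDefinable, h] using hP

theorem not (hP : TraceDefinable P) : TraceDefinable fun n W => ¬P n W := by
  obtain ⟨q, l, hq, hfree, hsat⟩ := hP
  exact ⟨fun n => .neg (q n), l, hq.neg, hfree, fun n As W h => not_congr (hsat n As W h)⟩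

theorem and (hP : TraceDefinable P) (hQ : TraceDefinable Q) :
    TraceDefinable fun n W => P n W ∧ Q n W := by
  obtain ⟨q, l, hq, hfree, hsat⟩ := hP
  obtain ⟨r, m, hr, hfree', hsat'⟩ := hQ
  refine ⟨fun n => (q n).and (r n), l ++ m, hq.and hr,
    fun n => Set.union_subset (hfree n) (hfree' n), fun n As W h => ?_⟩
  obtain ⟨hl, hm⟩ := List.forall_mem_append.1 h
  rw [QF.sat_and, hsat n As W hl, hsat' n As W hm]

theorem or (hP : TraceDefinable P) (hQ : TraceDefinable Q) :
    TraceDefinable fun n W => P n W ∨ Q n W :=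
  (hP.not.and hQ.not).not.of_iff fun _ _ => or_iff_not_and_not

theorem imp (hP : TraceDefinable P) (hQ : TraceDefinable Q) :
    TraceDefinable fun n W => P n W → Q n W :=
  (hP.not.or hQ).of_iff fun _ _ => imp_iff_not_or

theorem iff (hP : TraceDefinable P) (hQ : TraceDefinable Q) :
    TraceDefinable fun n W => P n W ↔ Q n W :=
  ((hP.imp hQ).and (hQ.imp hP)).of_iff fun _ _ => iff_def

theorem eq_primrec (x : Fin k) (a : κ) {f : α → ℕ} (hf : Primrec f) :
    TraceDefinable fun n W => W x a = f n := by
  refine ⟨fun n => .nextN (f n) (.atom (encode a) x), [a], .nextN hf (.const _), fun n => ?_,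
    fun n As W h => ?_⟩
  · simp [QF.freeVars]
  · simp only [QF.sat_nextN, QF.sat, shiftAsg_apply, Nat.zero_add, h a (by simp) x _, eq_comm]

variable [NeZero k]

theorem const (p : Prop) : TraceDefinable fun (_ : α) (_ : Fin k → κ → ℕ) => p := by
  classical
  refine ⟨fun _ => .ofProp p, [], .const _, fun _ => ?_, fun _ As W _ => QF.sat_ofProp As p⟩
  simpa using NeZero.pos k

theorem forall_lt (m : ℕ) {P : ℕ → α → (Fin k → κ → ℕ) → Prop}
    (hP : ∀ i < m, TraceDefinable (P i)) : TraceDefinable fun n W => ∀ i < m, P i n W := by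
  induction m with
  | zero => exact (const True).of_iff fun _ _ => by simp
  | succ m ih =>
    exact ((ih fun i hi => hP i (by omega)).and (hP m (by omega))).of_iff
      fun _ _ => Nat.forall_lt_succ_right

theorem forall_le (m : ℕ) {P : ℕ → α → (Fin k → κ → ℕ) → Prop}
    (hP : ∀ i, TraceDefinable (P i)) : TraceDefinable fun n W => ∀ i ≤ m, P i n W := by
  simpa only [Nat.lt_succ_iff] using forall_lt (m + 1) fun i _ => hP i

variable (x y : Fin k) (a b : κ)

theorem eq : TraceDefinable fun (_ : α) W => W x a = W y b := by
  refine ⟨fun _ => .eventually (.and (.atom (encode a) x) (.atom (encode b) y)), [a, b], .const _,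
    fun n => ?_, fun n As W h => ?_⟩
  · simp [QF.freeVars, Set.insert_subset_iff, NeZero.pos k]
  · have ha := h a (by simp) x
    have hb := h b (by simp) y
    simp only [QF.sat_eventually, QF.sat_and, QF.sat, shiftAsg_apply, Nat.zero_add, ha _, hb _,
      exists_eq_left]

theorem eq_succ : TraceDefinable fun (_ : α) W => W y b = W x a + 1 := by
  refine ⟨fun _ => .eventually (.and (.atom (encode a) x) (.next (.atom (encode b) y))), [a, b],
    .const _, fun n => ?_, fun n As W h => ?_⟩
  · simp [QF.freeVars, Set.insert_subset_iff, NeZero.pos k]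
  · have ha := h a (by simp) x
    have hb := h b (by simp) y
    simp only [QF.sat_eventually, QF.sat_and, QF.sat, shiftAsg_apply, Nat.zero_add, ha _, hb _,
      exists_eq_left, Nat.add_comm 1, eq_comm]

theorem lt : TraceDefinable fun (_ : α) W => W x a < W y b := by
  refine ⟨fun _ => .eventually (.and (.atom (encode a) x)
    (.next (.eventually (.atom (encode b) y)))), [a, b], .const _,
    fun n => ?_, fun n As W h => ?_⟩
  · simp [QF.freeVars, Set.insert_subset_iff, NeZero.pos k]
  · have ha := h a (by simp) x
    have hb := h b (by simp) y
    simp only [QF.sat_eventually, QF.sat_and, QF.sat, shiftAsg_apply, Nat.zero_add, ha _, hb _,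
      exists_eq_left]
    exact ⟨fun ⟨j, hj⟩ => by omega, fun hlt => ⟨W y b - (W x a + 1), by omega⟩⟩

end TraceDefinable

/-- There is a set of tuples satisfying `∃ w₀, ∀ w₁ w₂, ∃ w₃, P (w₀, w₁, w₂, w₃)`. -/
def TupleSatisfiable (P : (Fin 4 → κ → ℕ) → Prop) : Prop :=
  ∃ M : Set (κ → ℕ), ∃ w₀ ∈ M, ∀ w₁ ∈ M, ∀ w₂ ∈ M, ∃ w₃ ∈ M, P ![w₀, w₁, w₂, w₃]

/-- The traces `0, …, 3` record the components in `l` of some tuples. -/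
def recording (l : List κ) : QF ℕ :=
  .all (l.map fun a => .all ((List.range 4).map fun x => .once (encode a) x))

/-- The sentence expressing that the property defined by `q` is satisfied by the tuples whose
components in `l` are recorded by the traces of a model. -/
def tupleSentence (l : List κ) (q : QF ℕ) : HFormula ℕ :=
  .ex 0 (.all 1 (.all 2 (.ex 3 (.qf ((recording l).and q)))))

theorem isSentence_tupleSentence {l : List κ} {q : QF ℕ} (hq : q.freeVars ⊆ Set.Iio 4) :
    (tupleSentence l q).IsSentence := by
  have hrec : (recording l).freeVars ⊆ Set.Iio 4 := by
    refine QF.freeVars_all_subset (by simp) (List.forall_mem_map.2 fun a _ => ?_)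
    refine QF.freeVars_all_subset (by simp) (List.forall_mem_map.2 fun x hx => ?_)
    simpa [Set.insert_subset_iff] using hx
  rw [HFormula.IsSentence, Set.eq_empty_iff_forall_notMem]
  intro x hx
  simp only [tupleSentence, HFormula.freeVars, Set.mem_sdiff, Set.mem_singleton_iff] at hx
  have : x < 4 := Set.union_subset hrec hq hx.1.1.1.1
  omega

theorem sat_recording (l : List κ) (As : ℕ → Trace ℕ) : (recording l).sat As ↔
    ∀ a ∈ l, ∀ x : Fin 4, ∃ m, ∀ i, encode a ∈ As x i ↔ i = m := by
  simp only [recording, QF.sat_all, List.forall_mem_map, QF.sat_once, List.mem_range,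
    Fin.forall_iff]

/-- The assignment of the traces `t` to the first four trace variables. -/
def assignment (t : Fin 4 → Trace ℕ) : ℕ → Trace ℕ :=
  Function.update (Function.update (Function.update (Function.update (fun _ _ => ∅) 0 (t 0))
    1 (t 1)) 2 (t 2)) 3 (t 3)

theorem assignment_val (t : Fin 4 → Trace ℕ) (x : Fin 4) : assignment t x = t x := by
  fin_cases x <;> rfl

theorem hsatisfiable_tupleSentence_iff {l : List κ} {q : QF ℕ} {P : (Fin 4 → κ → ℕ) → Prop}
    (hsat : ∀ (As : ℕ → Trace ℕ) W, (∀ a ∈ l, ∀ x : Fin 4, (As x).Records (W x) a) →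
      (q.sat As ↔ P W)) :
    HSatisfiable (tupleSentence l q) ↔ TupleSatisfiable P := by
  have hmatrix (T : Set (Trace ℕ)) : HModels T (tupleSentence l q) ↔
      ∃ t₀ ∈ T, ∀ t₁ ∈ T, ∀ t₂ ∈ T, ∃ t₃ ∈ T,
        ((recording l).and q).sat (assignment ![t₀, t₁, t₂, t₃]) := Iff.rfl
  simp only [HSatisfiable, hmatrix, QF.sat_and, sat_recording, assignment_val]
  constructor
  · rintro ⟨T, t₀, ht₀, hT⟩
    refine ⟨Trace.toTuple '' T, _, ⟨t₀, ht₀, rfl⟩, ?_⟩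
    rintro _ ⟨t₁, ht₁, rfl⟩ _ ⟨t₂, ht₂, rfl⟩
    obtain ⟨t₃, ht₃, hrec, hq⟩ := hT t₁ ht₁ t₂ ht₂
    refine ⟨_, ⟨t₃, ht₃, rfl⟩, (hsat _ _ fun a ha x => ?_).1 hq⟩
    have hx := Trace.records_toTuple (hrec a ha x)
    rw [assignment_val]
    fin_cases x <;> exact hx
  · rintro ⟨M, w₀, hw₀, hM⟩
    refine ⟨Trace.ofTuple '' M, _, ⟨w₀, hw₀, rfl⟩, ?_⟩
    rintro _ ⟨w₁, hw₁, rfl⟩ _ ⟨w₂, hw₂, rfl⟩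
    obtain ⟨w₃, hw₃, hP⟩ := hM w₁ hw₁ w₂ hw₂
    have hrec (a : κ) (x : Fin 4) : (assignment ![Trace.ofTuple w₀, Trace.ofTuple w₁,
        Trace.ofTuple w₂, Trace.ofTuple w₃] x).Records (![w₀, w₁, w₂, w₃] x) a := by
      rw [assignment_val]
      fin_cases x <;> exact Trace.records_ofTuple _ a
    refine ⟨_, ⟨w₃, hw₃, rfl⟩, fun a _ x => ⟨![w₀, w₁, w₂, w₃] x a, ?_⟩,
      (hsat _ _ fun a _ => hrec a).2 hP⟩
    simpa only [assignment_val, Trace.Records] using hrec a x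

theorem TraceDefinable.manyOneRed_hsatisfiable {P : ℕ → (Fin 4 → κ → ℕ) → Prop}
    (hP : TraceDefinable P) :
    ManyOneRed {n | TupleSatisfiable (P n)} {n : ℕ | ∃ φ : HFormula ℕ, φ.IsSentence ∧
      HFormula.codeWith id φ = n ∧ HSatisfiable φ} := by
  obtain ⟨q, l, hq, hfree, hsat⟩ := hP
  have hcode : HFormula.PrimrecCode fun n => tupleSentence l (q n) :=
    ((((HFormula.PrimrecCode.qf (.and (.const _) hq)).ex 3).all 2).all 1).ex 0
  refine ⟨_, hcode.to_comp, fun n => ?_⟩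
  rw [Set.mem_ofPred_eq, ← hsatisfiable_tupleSentence_iff (hsat n)]
  refine ⟨fun h => ⟨_, isSentence_tupleSentence (hfree n), rfl, h⟩, ?_⟩
  rintro ⟨φ, -, hφ, h⟩
  have heq : φ = tupleSentence l (q n) :=
    HFormula.codeWith_injective Function.injective_id hφ
  exact heq ▸ h

end Tuples

/-! ### Arithmetic -/

/-- An injective code of the terms of arithmetic. -/
def ATerm.code : ATerm → ℕ
  | .var i => Nat.pair 0 i
  | .zero => Nat.pair 1 0
  | .one => Nat.pair 2 0
  | .add s t => Nat.pair 3 (Nat.pair s.code t.code)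
  | .mul s t => Nat.pair 4 (Nat.pair s.code t.code)
  | .app f t => Nat.pair 5 (Nat.pair f t.code)

/-- An injective code of the formulas of arithmetic. -/
def AForm.code : AForm → ℕ
  | .eq s t => Nat.pair 0 (Nat.pair s.code t.code)
  | .lt s t => Nat.pair 1 (Nat.pair s.code t.code)
  | .neg φ => Nat.pair 2 φ.code
  | .disj φ ψ => Nat.pair 3 (Nat.pair φ.code ψ.code)
  | .exN x φ => Nat.pair 4 (Nat.pair x φ.code)
  | .allN x φ => Nat.pair 5 (Nat.pair x φ.code)

theorem ATerm.code_injective : Function.Injective ATerm.code := by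
  intro s
  induction s <;> rintro (_ | _ | _ | _ | _ | _) h <;>
    simp only [code, Nat.pair_eq_pair] at h <;> grind

theorem AForm.code_injective : Function.Injective AForm.code := by
  intro φ
  induction φ <;> rintro (_ | _ | _ | _ | _ | _) h <;>
    simp only [code, Nat.pair_eq_pair, ATerm.code_injective.eq_iff] at h <;> grind

/-- The largest index of a number variable of a term. -/
def ATerm.maxVar : ATerm → ℕ
  | .var i => i
  | .zero | .one => 0
  | .add s t | .mul s t => max s.maxVar t.maxVar
  | .app _ t => t.maxVar

/-- The largest index of a free or bound number variable of a formula. -/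
def AForm.maxVar : AForm → ℕ
  | .eq s t | .lt s t => max s.maxVar t.maxVar
  | .neg φ => φ.maxVar
  | .disj φ ψ => max φ.maxVar ψ.maxVar
  | .exN x φ | .allN x φ => max x φ.maxVar

/-- The components of the tuples that represent assignments of numbers to the variables. Besides
a counter there are the values of terms, the truth values of formulas, where `0` stands for truth,
and for every `x` and `φ` a number making `φ` true as a value of `x`, if there is one. -/
inductive Entry where
  | counter : Entry
  | value : ATerm → Entry
  | truth : AForm → Entry
  | witness : ℕ → AForm → Entry

namespace Entry

/-- An injective code of the entries. -/
def code : Entry → ℕ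
  | counter => Nat.pair 0 0
  | value s => Nat.pair 1 s.code
  | truth φ => Nat.pair 2 φ.code
  | witness x φ => Nat.pair 3 (Nat.pair x φ.code)

theorem code_injective : Function.Injective code := by
  rintro (_ | _ | _ | _) (_ | _ | _ | _) h <;>
    simp only [code, Nat.pair_eq_pair, ATerm.code_injective.eq_iff,
      AForm.code_injective.eq_iff] at h <;> grind

noncomputable instance : Encodable Entry :=
  have := code_injective.countable
  .ofCountable Entry

/-- The value of the variable `i`. -/
abbrev var (i : ℕ) : Entry := value (.var i)

/-- The sum of the variables `0` and `1`. -/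
abbrev sum : Entry := value (.add (.var 0) (.var 1))

/-- The product of the variables `0` and `1`. -/
abbrev prod : Entry := value (.mul (.var 0) (.var 1))

end Entry

/-- A tuple of natural numbers indexed by the entries. -/
abbrev Row : Type := Entry → ℕ

/-- The values of the subterms of a term in the row `u` are computed correctly, provided that the
row `w` has correct sums, products and function values of the variables `0` and `1`. -/
def ATerm.Coherent (u w : Row) : ATerm → Prop
  | .var _ => True
  | .zero => u (.value .zero) = 0
  | .one => u (.value .one) = 1
  | .add s t => s.Coherent u w ∧ t.Coherent u w ∧
      (w (.var 0) = u (.value s) → w (.var 1) = u (.value t) → u (.value (.add s t)) = w .sum)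
  | .mul s t => s.Coherent u w ∧ t.Coherent u w ∧
      (w (.var 0) = u (.value s) → w (.var 1) = u (.value t) → u (.value (.mul s t)) = w .prod)
  | .app f t => t.Coherent u w ∧
      (w (.var 0) = u (.value t) → u (.value (.app f t)) = w (.value (.app f (.var 0))))

/-- The rows agree on all variables up to `k` except possibly on `x`. -/
def AgreeOff (k x : ℕ) (u w : Row) : Prop := ∀ i ≤ k, i ≠ x → w (.var i) = u (.var i)

/-- The truth values of the subformulas of a formula in the row `u` obey the semantics of the
logical operators, as far as the row `w` bears on them. The witness for `¬φ` serves as the potential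
counterexample to `∀x φ`. -/
def AForm.Coherent (k : ℕ) (u w : Row) : AForm → Prop
  | .eq s t => s.Coherent u w ∧ t.Coherent u w ∧
      (u (.truth (.eq s t)) = 0 ↔ u (.value s) = u (.value t))
  | .lt s t => s.Coherent u w ∧ t.Coherent u w ∧
      (u (.truth (.lt s t)) = 0 ↔ u (.value s) < u (.value t))
  | .neg φ => φ.Coherent k u w ∧ (u (.truth (.neg φ)) = 0 ↔ ¬u (.truth φ) = 0)
  | .disj φ ψ => φ.Coherent k u w ∧ ψ.Coherent k u w ∧
      (u (.truth (.disj φ ψ)) = 0 ↔ u (.truth φ) = 0 ∨ u (.truth ψ) = 0)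
  | .exN x φ => φ.Coherent k u w ∧ (AgreeOff k x u w →
      (w (.truth φ) = 0 → u (.truth (.exN x φ)) = 0) ∧
      (w (.var x) = u (.witness x φ) → u (.truth (.exN x φ)) = 0 → w (.truth φ) = 0))
  | .allN x φ => φ.Coherent k u w ∧ (AgreeOff k x u w →
      (u (.truth (.allN x φ)) = 0 → w (.truth φ) = 0) ∧
      (w (.var x) = u (.witness x (.neg φ)) → w (.truth φ) = 0 → u (.truth (.allN x φ)) = 0))

/-- The row `w` arises from the row `u` by moving the value of each variable below `k` to the next
variable and replacing the value of the variable `0` by the counter of the row `v`. The counter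
itself is incremented. -/
structure Push (k : ℕ) (u v w : Row) : Prop where
  counter : w .counter = u .counter + 1
  head : w (.var 0) = v .counter
  tail : ∀ i < k, w (.var (i + 1)) = u (.var i)

/-- The recursive definitions of addition and multiplication of the variables `0` and `1`, for
rows `u` and `w` such that the variable `0` has a larger value in `w` by one. -/
structure RecursionCoherent (u w : Row) : Prop where
  add_zero : u (.var 0) = 0 → u .sum = u (.var 1)
  add_succ : w (.var 0) = u (.var 0) + 1 → w (.var 1) = u (.var 1) → w .sum = u .sum + 1
  mul_zero : u (.var 0) = 0 → u .prod = 0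
  mul_succ : w (.var 0) = u (.var 0) + 1 → w (.var 1) = u (.var 1) →
    w .prod = u (.value (.add (.mul (.var 0) (.var 1)) (.var 1)))
  succ_mul : (ATerm.add (.mul (.var 0) (.var 1)) (.var 1)).Coherent u w

/-- The property that a set of rows has to satisfy as in `TupleSatisfiable` in order to describe
the truth of `ψ` when all variables have the value `n`. -/
structure AForm.RowSpec (ψ : AForm) (n : ℕ) (W : Fin 4 → Row) : Prop where
  counter : W 0 .counter = 0
  truth : W 0 (.truth ψ) = 0
  input : ∀ i ≤ ψ.maxVar + 1, W 0 (.var i) = n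
  push : Push (ψ.maxVar + 1) (W 1) (W 2) (W 3)
  recursion : RecursionCoherent (W 1) (W 2)
  coherent : ψ.Coherent (ψ.maxVar + 1) (W 1) (W 2)

section Definability

variable {k : ℕ} [NeZero k] (x y z : Fin k)

namespace TraceDefinable

variable {α : Type} [Primcodable α]

theorem atermCoherent (s : ATerm) :
    TraceDefinable fun (_ : α) (W : Fin k → Row) => s.Coherent (W x) (W y) := by
  induction s with
  | var => exact const True
  | zero => exact eq_primrec _ _ (.const 0)
  | one => exact eq_primrec _ _ (.const 1)
  | add s t ihs iht | mul s t ihs iht =>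
    exact ihs.and (iht.and ((eq ..).imp ((eq ..).imp (eq ..))))
  | app f t ih => exact ih.and ((eq ..).imp (eq ..))

theorem agreeOff (m i : ℕ) :
    TraceDefinable fun (_ : α) (W : Fin k → Row) => AgreeOff m i (W x) (W y) :=
  forall_le m fun _ => (const _).imp (eq ..)

theorem aformCoherent (m : ℕ) (φ : AForm) :
    TraceDefinable fun (_ : α) (W : Fin k → Row) => φ.Coherent m (W x) (W y) := by
  have truth (x : Fin k) (φ : AForm) :
      TraceDefinable fun (_ : α) (W : Fin k → Row) => W x (.truth φ) = 0 :=
    eq_primrec _ _ (.const 0)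
  induction φ with
  | eq s t => exact (atermCoherent ..).and ((atermCoherent ..).and ((truth ..).iff (eq ..)))
  | lt s t => exact (atermCoherent ..).and ((atermCoherent ..).and ((truth ..).iff (lt ..)))
  | neg φ ih => exact ih.and ((truth ..).iff (truth ..).not)
  | disj φ ψ ihφ ihψ => exact ihφ.and (ihψ.and ((truth ..).iff ((truth ..).or (truth ..))))
  | exN i φ ih | allN i φ ih =>
    exact ih.and ((agreeOff ..).imp
      (((truth ..).imp (truth ..)).and ((eq ..).imp ((truth ..).imp (truth ..)))))

theorem push (m : ℕ) :
    TraceDefinable fun (_ : α) (W : Fin k → Row) => Push m (W x) (W y) (W z) :=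
  ((eq_succ ..).and ((eq ..).and (forall_lt m fun _ _ => eq ..))).of_iff
    fun _ _ => ⟨fun ⟨h₁, h₂, h₃⟩ => ⟨h₁, h₂, h₃⟩, fun ⟨h₁, h₂, h₃⟩ => ⟨h₁, h₂, h₃⟩⟩

theorem recursionCoherent :
    TraceDefinable fun (_ : α) (W : Fin k → Row) => RecursionCoherent (W x) (W y) :=
  (((eq_primrec _ _ (.const 0)).imp (eq ..)).and <|
    ((eq_succ ..).imp ((eq ..).imp (eq_succ ..))).and <|
    ((eq_primrec _ _ (.const 0)).imp (eq_primrec _ _ (.const 0))).and <|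
    ((eq_succ ..).imp ((eq ..).imp (eq ..))).and (atermCoherent ..)).of_iff
    fun _ _ => ⟨fun ⟨h₁, h₂, h₃, h₄, h₅⟩ => ⟨h₁, h₂, h₃, h₄, h₅⟩,
      fun ⟨h₁, h₂, h₃, h₄, h₅⟩ => ⟨h₁, h₂, h₃, h₄, h₅⟩⟩

theorem rowSpec (ψ : AForm) : TraceDefinable ψ.RowSpec :=
  ((eq_primrec _ _ (.const 0)).and <| (eq_primrec _ _ (.const 0)).and <|
    (forall_le _ fun _ => eq_primrec _ _ .id).and <| (push ..).and <|
    (recursionCoherent ..).and (aformCoherent ..)).of_iff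
    fun _ _ => ⟨fun ⟨h₁, h₂, h₃, h₄, h₅, h₆⟩ => ⟨h₁, h₂, h₃, h₄, h₅, h₆⟩,
      fun ⟨h₁, h₂, h₃, h₄, h₅, h₆⟩ => ⟨h₁, h₂, h₃, h₄, h₅, h₆⟩⟩

end TraceDefinable

end Definability

/-! ### Rows describe the standard model -/

section Soundness

variable {M : Set Row} {k : ℕ}

/-- Every assignment of numbers to the variables up to `k` is represented by a row in `M`. -/
def RealizesAssignments (k : ℕ) (M : Set Row) : Prop :=
  ∀ v : ℕ → ℕ, ∃ w ∈ M, ∀ i ≤ k, w (.var i) = v i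

theorem realizesAssignments_of_push {w₀ : Row} (hw₀ : w₀ ∈ M) (hcounter : w₀ .counter = 0)
    (hpush : ∀ u ∈ M, ∀ v ∈ M, ∃ w ∈ M, Push k u v w) : RealizesAssignments k M := by
  have exists_counter_eq (n : ℕ) : ∃ w ∈ M, w .counter = n := by
    induction n with
    | zero => exact ⟨w₀, hw₀, hcounter⟩
    | succ n ih =>
      obtain ⟨u, hu, hn⟩ := ih
      obtain ⟨w, hw, huw⟩ := hpush u hu u hu
      exact ⟨w, hw, hn ▸ huw.counter⟩
  have exists_init (j : ℕ) (hj : j ≤ k) (v : ℕ → ℕ) : ∃ w ∈ M, ∀ i ≤ j, w (.var i) = v i := by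
    induction j generalizing v with
    | zero =>
      obtain ⟨u, hu, hv⟩ := exists_counter_eq (v 0)
      obtain ⟨w, hw, huw⟩ := hpush u hu u hu
      exact ⟨w, hw, fun i hi => by rw [Nat.le_zero.1 hi, huw.head, hv]⟩
    | succ j ih =>
      obtain ⟨t, ht, htail⟩ := ih (by omega) fun i => v (i + 1)
      obtain ⟨u, hu, hv⟩ := exists_counter_eq (v 0)
      obtain ⟨w, hw, huw⟩ := hpush t ht u hu
      refine ⟨w, hw, fun i hi => ?_⟩
      cases i with
      | zero => rw [huw.head, hv]
      | succ i => rw [huw.tail i (by omega), htail i (by omega)]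
  exact exists_init k le_rfl

namespace RealizesAssignments

theorem exists_pair (hM : RealizesAssignments k M) (hk : 1 ≤ k) (a b : ℕ) :
    ∃ w ∈ M, w (.var 0) = a ∧ w (.var 1) = b := by
  obtain ⟨w, hw, hwv⟩ := hM fun i => Nat.casesOn i a fun _ => b
  exact ⟨w, hw, hwv 0 k.zero_le, hwv 1 hk⟩

theorem exists_update (hM : RealizesAssignments k M) {u : Row} {v : ℕ → ℕ}
    (hv : ∀ i ≤ k, u (.var i) = v i) (x n : ℕ) :
    ∃ w ∈ M, AgreeOff k x u w ∧ ∀ i ≤ k, w (.var i) = Function.update v x n i := by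
  obtain ⟨w, hw, hwv⟩ := hM (Function.update v x n)
  exact ⟨w, hw, fun i hi hx => by rw [hwv i hi, Function.update_of_ne hx, hv i hi], hwv⟩

theorem sum_eq_add (hM : RealizesAssignments k M) (hk : 1 ≤ k)
    (hrec : ∀ u ∈ M, ∀ w ∈ M, RecursionCoherent u w) {w : Row} (hw : w ∈ M) :
    w .sum = w (.var 0) + w (.var 1) := by
  induction ha : w (.var 0) generalizing w with
  | zero => rw [(hrec w hw w hw).add_zero ha, Nat.zero_add]
  | succ a ih =>
    obtain ⟨u, hu, hu₀, hu₁⟩ := hM.exists_pair hk a (w (.var 1))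
    rw [(hrec u hu w hw).add_succ (hu₀ ▸ ha) hu₁.symm, ih hu hu₀, hu₁, Nat.add_right_comm]

theorem value_add (hM : RealizesAssignments k M) (hk : 1 ≤ k)
    (hrec : ∀ u ∈ M, ∀ w ∈ M, RecursionCoherent u w) {u : Row} {s t : ATerm}
    (h : ∀ w ∈ M, (ATerm.add s t).Coherent u w) :
    u (.value (.add s t)) = u (.value s) + u (.value t) := by
  obtain ⟨w, hw, hw₀, hw₁⟩ := hM.exists_pair hk (u (.value s)) (u (.value t))
  rw [(h w hw).2.2 hw₀ hw₁, hM.sum_eq_add hk hrec hw, hw₀, hw₁]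

theorem prod_eq_mul (hM : RealizesAssignments k M) (hk : 1 ≤ k)
    (hrec : ∀ u ∈ M, ∀ w ∈ M, RecursionCoherent u w) {w : Row} (hw : w ∈ M) :
    w .prod = w (.var 0) * w (.var 1) := by
  induction ha : w (.var 0) generalizing w with
  | zero => rw [(hrec w hw w hw).mul_zero ha, Nat.zero_mul]
  | succ a ih =>
    obtain ⟨u, hu, hu₀, hu₁⟩ := hM.exists_pair hk a (w (.var 1))
    rw [(hrec u hu w hw).mul_succ (hu₀ ▸ ha) hu₁.symm,
      hM.value_add hk hrec fun w hw => (hrec u hu w hw).succ_mul, ih hu hu₀, hu₁, Nat.succ_mul]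

theorem value_mul (hM : RealizesAssignments k M) (hk : 1 ≤ k)
    (hrec : ∀ u ∈ M, ∀ w ∈ M, RecursionCoherent u w) {u : Row} {s t : ATerm}
    (h : ∀ w ∈ M, (ATerm.mul s t).Coherent u w) :
    u (.value (.mul s t)) = u (.value s) * u (.value t) := by
  obtain ⟨w, hw, hw₀, hw₁⟩ := hM.exists_pair hk (u (.value s)) (u (.value t))
  rw [(h w hw).2.2 hw₀ hw₁, hM.prod_eq_mul hk hrec hw, hw₀, hw₁]

theorem value_eq_eval (hM : RealizesAssignments k M) (hk : 1 ≤ k)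
    (hrec : ∀ u ∈ M, ∀ w ∈ M, RecursionCoherent u w) {F : ℕ → ℕ → ℕ}
    (hF : ∀ f n, ∃ w ∈ M, w (.var 0) = n ∧ w (.value (.app f (.var 0))) = F f n)
    {s : ATerm} (hs : s.maxVar ≤ k) {u : Row} (h : ∀ w ∈ M, s.Coherent u w) (hu : u ∈ M)
    {v : ℕ → ℕ} (hv : ∀ i ≤ k, u (.var i) = v i) : u (.value s) = s.eval v F := by
  induction s with
  | var i => exact hv i hs
  | zero => exact h u hu
  | one => exact h u hu
  | add s t ihs iht =>
    obtain ⟨hs, ht⟩ := max_le_iff.1 hs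
    rw [hM.value_add hk hrec h, ihs hs fun w hw => (h w hw).1,
      iht ht fun w hw => (h w hw).2.1, ATerm.eval]
  | mul s t ihs iht =>
    obtain ⟨hs, ht⟩ := max_le_iff.1 hs
    rw [hM.value_mul hk hrec h, ihs hs fun w hw => (h w hw).1,
      iht ht fun w hw => (h w hw).2.1, ATerm.eval]
  | app f t ih =>
    obtain ⟨w, hw, hw₀, hwF⟩ := hF f (u (.value t))
    rw [(h w hw).2 hw₀, hwF, ih hs fun w hw => (h w hw).1, ATerm.eval]

theorem truth_eq_zero_iff_sat (hM : RealizesAssignments k M) (hk : 1 ≤ k)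
    (hrec : ∀ u ∈ M, ∀ w ∈ M, RecursionCoherent u w) {F : ℕ → ℕ → ℕ}
    (hF : ∀ f n, ∃ w ∈ M, w (.var 0) = n ∧ w (.value (.app f (.var 0))) = F f n)
    {φ : AForm} (hφ : φ.maxVar ≤ k) (h : ∀ u ∈ M, ∀ w ∈ M, φ.Coherent k u w)
    {u : Row} (hu : u ∈ M) {v : ℕ → ℕ} (hv : ∀ i ≤ k, u (.var i) = v i) :
    u (.truth φ) = 0 ↔ φ.sat v F := by
  induction φ generalizing u v with
  | eq s t | lt s t =>
    obtain ⟨hs, ht⟩ := max_le_iff.1 hφ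
    rw [(h u hu u hu).2.2, hM.value_eq_eval hk hrec hF hs (fun w hw => (h u hu w hw).1) hu hv,
      hM.value_eq_eval hk hrec hF ht (fun w hw => (h u hu w hw).2.1) hu hv, AForm.sat]
  | neg φ ih =>
    exact (h u hu u hu).2.trans (not_congr (ih hφ (fun u hu w hw => (h u hu w hw).1) hu hv))
  | disj φ ψ ihφ ihψ =>
    obtain ⟨hφ, hψ⟩ := max_le_iff.1 hφ
    exact (h u hu u hu).2.2.trans (or_congr (ihφ hφ (fun u hu w hw => (h u hu w hw).1) hu hv)
      (ihψ hψ (fun u hu w hw => (h u hu w hw).2.1) hu hv))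
  | exN x φ ih =>
    obtain ⟨hx, hφ⟩ := max_le_iff.1 hφ
    specialize @ih hφ fun u hu w hw => (h u hu w hw).1
    constructor
    · intro htrue
      obtain ⟨w, hw, huw, hwv⟩ := hM.exists_update hv x (u (.witness x φ))
      refine ⟨_, (ih hw hwv).1 (((h u hu w hw).2 huw).2 ?_ htrue)⟩
      rw [hwv x hx, Function.update_self]
    · rintro ⟨n, hn⟩
      obtain ⟨w, hw, huw, hwv⟩ := hM.exists_update hv x n
      exact ((h u hu w hw).2 huw).1 ((ih hw hwv).2 hn)
  | allN x φ ih =>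
    obtain ⟨hx, hφ⟩ := max_le_iff.1 hφ
    specialize @ih hφ fun u hu w hw => (h u hu w hw).1
    constructor
    · intro htrue n
      obtain ⟨w, hw, huw, hwv⟩ := hM.exists_update hv x n
      exact (ih hw hwv).1 (((h u hu w hw).2 huw).1 htrue)
    · intro hall
      obtain ⟨w, hw, huw, hwv⟩ := hM.exists_update hv x (u (.witness x (.neg φ)))
      refine ((h u hu w hw).2 huw).2 ?_ ((ih hw hwv).2 (hall _))
      rw [hwv x hx, Function.update_self]

end RealizesAssignments

theorem exists_sat_of_tupleSatisfiable {ψ : AForm} {n : ℕ} (h : TupleSatisfiable (ψ.RowSpec n)) :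
    ∃ F, ψ.sat (fun _ => n) F := by
  obtain ⟨M, w₀, hw₀, hspec⟩ := h
  choose! w₃ hw₃ hspec using hspec
  have hM : RealizesAssignments (ψ.maxVar + 1) M :=
    realizesAssignments_of_push hw₀ (hspec _ hw₀ _ hw₀).counter
      fun u hu v hv => ⟨_, hw₃ u hu v hv, (hspec u hu v hv).push⟩
  choose row hrow hrow₀ _ using fun n => hM.exists_pair (Nat.le_add_left _ _) n 0
  exact ⟨fun f n => row n (.value (.app f (.var 0))),
    (hM.truth_eq_zero_iff_sat (Nat.le_add_left _ _) (fun u hu w hw => (hspec u hu w hw).recursion)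
      (fun f n => ⟨row n, hrow n, hrow₀ n, rfl⟩) (Nat.le_succ _)
      (fun u hu w hw => (hspec u hu w hw).coherent) hw₀ (hspec _ hw₀ _ hw₀).input).1
    (hspec _ hw₀ _ hw₀).truth⟩

end Soundness

section Completeness

variable {F : ℕ → ℕ → ℕ}

open Classical in
/-- The row with the counter `m` in which all other entries have the intended values under the
assignment `v` and the interpretation `F` of the function variables. -/
noncomputable def standardRow (F : ℕ → ℕ → ℕ) (v : ℕ → ℕ) (m : ℕ) : Row
  | .counter => m
  | .value s => s.eval v F
  | .truth φ => if φ.sat v F then 0 else 1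
  | .witness x φ => sInf {n | φ.sat (Function.update v x n) F}

theorem standardRow_truth_eq_zero_iff (φ : AForm) (v : ℕ → ℕ) (m : ℕ) :
    standardRow F v m (.truth φ) = 0 ↔ φ.sat v F := by
  simp [standardRow]

theorem atermCoherent_standardRow (s : ATerm) (v v' : ℕ → ℕ) (m m' : ℕ) :
    s.Coherent (standardRow F v m) (standardRow F v' m') := by
  induction s with
  | var => trivial
  | zero | one => rfl
  | add s t ihs iht | mul s t ihs iht =>
    refine ⟨ihs, iht, fun hs ht => ?_⟩
    simp only [standardRow, ATerm.eval] at hs ht ⊢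
    rw [hs, ht]
  | app f t ih =>
    refine ⟨ih, fun ht => ?_⟩
    simp only [standardRow, ATerm.eval] at ht ⊢
    rw [ht]

theorem recursionCoherent_standardRow (v v' : ℕ → ℕ) (m m' : ℕ) :
    RecursionCoherent (standardRow F v m) (standardRow F v' m') where
  add_zero h := by simp_all [standardRow, ATerm.eval]
  add_succ h₀ h₁ := by simp_all [standardRow, ATerm.eval, Nat.add_right_comm]
  mul_zero h := by simp_all [standardRow, ATerm.eval]
  mul_succ h₀ h₁ := by simp_all [standardRow, ATerm.eval, Nat.succ_mul]
  succ_mul := atermCoherent_standardRow ..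

theorem eq_update_of_agreeOff {k n x m m' : ℕ} {v v' : ℕ → ℕ} (hv : ∀ i > k, v i = n)
    (hv' : ∀ i > k, v' i = n) (h : AgreeOff k x (standardRow F v m) (standardRow F v' m')) :
    v' = Function.update v x (v' x) := by
  refine Function.eq_update_iff.2 ⟨rfl, fun i hi => ?_⟩
  obtain hik | hik := le_or_gt i k
  · exact h i hik hi
  · rw [hv i hik, hv' i hik]

theorem sat_update_standardRow_witness (φ : AForm) (x : ℕ) (v : ℕ → ℕ) (m : ℕ)
    (h : ∃ n, φ.sat (Function.update v x n) F) :
    φ.sat (Function.update v x (standardRow F v m (.witness x φ))) F :=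
  Nat.sInf_mem h

theorem aformCoherent_standardRow (φ : AForm) {k n : ℕ} {v v' : ℕ → ℕ} (hv : ∀ i > k, v i = n)
    (hv' : ∀ i > k, v' i = n) (m m' : ℕ) :
    φ.Coherent k (standardRow F v m) (standardRow F v' m') := by
  induction φ with
  | eq s t | lt s t =>
    exact ⟨atermCoherent_standardRow .., atermCoherent_standardRow ..,
      standardRow_truth_eq_zero_iff ..⟩
  | neg φ ih =>
    refine ⟨ih, ?_⟩
    simp only [standardRow_truth_eq_zero_iff, AForm.sat]
  | disj φ ψ ihφ ihψ =>
    refine ⟨ihφ, ihψ, ?_⟩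
    simp only [standardRow_truth_eq_zero_iff, AForm.sat]
  | exN x φ ih =>
    refine ⟨ih, fun hagree => ?_⟩
    have heq := eq_update_of_agreeOff hv hv' hagree
    simp only [standardRow_truth_eq_zero_iff, AForm.sat]
    refine ⟨fun h => ⟨v' x, heq ▸ h⟩, fun hx h => ?_⟩
    rw [heq, show v' x = _ from hx]
    exact sat_update_standardRow_witness φ x v m h
  | allN x φ ih =>
    refine ⟨ih, fun hagree => ?_⟩
    have heq := eq_update_of_agreeOff hv hv' hagree
    simp only [standardRow_truth_eq_zero_iff, AForm.sat]
    refine ⟨fun h => heq ▸ h _, fun hx h => ?_⟩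
    by_contra! hnot
    refine sat_update_standardRow_witness (.neg φ) x v m hnot ?_
    rwa [← show v' x = _ from hx, ← heq]

theorem tupleSatisfiable_of_sat {ψ : AForm} {n : ℕ} (h : ψ.sat (fun _ => n) F) :
    TupleSatisfiable (ψ.RowSpec n) := by
  refine ⟨{w | ∃ v m, (∀ i > ψ.maxVar + 1, v i = n) ∧ standardRow F v m = w},
    _, ⟨fun _ => n, 0, fun _ _ => rfl, rfl⟩, ?_⟩
  rintro _ ⟨v₁, m₁, hv₁, rfl⟩ _ ⟨v₂, m₂, hv₂, rfl⟩
  let v₃ : ℕ → ℕ := fun i => if i ≤ ψ.maxVar + 1 then Nat.casesOn i m₂ v₁ else n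
  refine ⟨_, ⟨v₃, m₁ + 1, fun i hi => if_neg hi.not_ge, rfl⟩, ?_⟩
  exact {
    counter := rfl
    truth := (standardRow_truth_eq_zero_iff ψ _ 0).2 h
    input := fun _ _ => rfl
    push := ⟨rfl, rfl, fun i hi => if_pos hi⟩
    recursion := recursionCoherent_standardRow ..
    coherent := aformCoherent_standardRow ψ hv₁ hv₂ .. }

end Completeness

theorem sigma11_manyOneRed_hsatisfiable {N : Set ℕ} (hN : Sigma11 N) :
    ManyOneRed N {n : ℕ | ∃ φ : HFormula ℕ, φ.IsSentence ∧
      HFormula.codeWith id φ = n ∧ HSatisfiable φ} := by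
  obtain ⟨ψ, hψ⟩ := hN
  have heq : N = {n | TupleSatisfiable (ψ.RowSpec n)} := by
    ext n
    exact (hψ n).trans ⟨fun ⟨_, h⟩ => tupleSatisfiable_of_sat h, exists_sat_of_tupleSatisfiable⟩
  exact heq ▸ (TraceDefinable.rowSpec ψ).manyOneRed_hsatisfiable

/-- **Σ¹₁-hardness of HyperLTL satisfiability via the recurring tiling problem**:
there is a total computable function mapping every finite set `Ti` of tiles with
designated tile `τ₀ ∈ Ti` to a HyperLTL sentence `φ_Ti` that is satisfiable iff
there is a recurrent tiling of the positive quadrant; consequently every Σ¹₁ set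
many-one reduces to HyperLTL satisfiability via a total computable function. -/
theorem hyperltl_sat_Sigma11_hard :
    (∃ toForm : Finset Tile × Tile → HFormula ℕ,
      (∀ inst, (toForm inst).IsSentence) ∧
      (∃ f : ℕ → ℕ, Computable f ∧
        ∀ inst : Finset Tile × Tile,
          f (Encodable.encode inst) = HFormula.codeWith id (toForm inst)) ∧
      (∀ (Ti : Finset Tile) (τ₀ : Tile), τ₀ ∈ Ti →
        (HSatisfiable (toForm (Ti, τ₀)) ↔ RecurTiling Ti τ₀))) ∧
    ∀ N : Set ℕ, Sigma11 N →
      ManyOneRed N {n : ℕ | ∃ φ : HFormula ℕ, φ.IsSentence ∧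
        HFormula.codeWith id φ = n ∧ HSatisfiable φ} := by
  have hcode := exists_computable_encode_finset_prod primrec_codeWith_tilingSentence
  refine ⟨⟨fun p => tilingSentence (encodeSort p.1) p.2, fun _ => isSentence_tilingSentence _ _,
    by simpa only using hcode, fun Ti τ₀ h₀ => ?_⟩, fun _ hN => sigma11_manyOneRed_hsatisfiable hN⟩
  have hmem : τ₀ ∈ encodeSort Ti := by rwa [← List.mem_toFinset, toFinset_encodeSort]
  rw [hsatisfiable_tilingSentence_iff hmem, toFinset_encodeSort]
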